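/- There is an isomorphism of unital ℤ-algebras 𝓔(r) ≅ End_{𝔈(r)}(Λ_r)^{op}, where End_{𝔈(r)}(Λ_r) is the endomorphism ring of the left 𝔈(r)-module Λ_r, sending the generators p_i, q_i, e, f of 𝓔(r) to the endomorphisms of Λ_r induced by right multiplication by P_{0,i}, Q_{0,i}, E, and F·P_{0,[r]}·Q_{0,[r]}, respectively. -/

import Mathlib

/-- Generators of the infinite-dimensional Clifford algebra `𝔈(r)`. -/
inductive EGen (r : ℕ) : Type
  | P (a : ℤ) (i : Fin r)
  | Q (a : ℤ) (i : Fin r)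
  | E
  | F

/-- A generator, viewed inside the free algebra. -/
noncomputable def eg {r : ℕ} (g : EGen r) : FreeAlgebra ℤ (EGen r) := FreeAlgebra.ι ℤ g

/-- The defining relations of `𝔈(r)`. -/
inductive ERel (r : ℕ) : FreeAlgebra ℤ (EGen r) → FreeAlgebra ℤ (EGen r) → Prop
  | Psq : ∀ (a : ℤ) (i : Fin r), ERel r (eg (.P a i) * eg (.P a i)) 0
  | Qsq : ∀ (a : ℤ) (i : Fin r), ERel r (eg (.Q a i) * eg (.Q a i)) 0
  | EP : ∀ (a : ℤ) (i : Fin r),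
      ERel r (eg .E * eg (.P a i)) (eg (.P (a - 1) i) * eg .E)
  | EQ : ∀ (a : ℤ) (i : Fin r),
      ERel r (eg .E * eg (.Q a i)) (eg (.Q (a - 1) i) * eg .E)
  | PP : ∀ (a b : ℤ) (i j : Fin r),
      ERel r (eg (.P a i) * eg (.P b j) + eg (.P b j) * eg (.P a i)) 0
  | QQ : ∀ (a b : ℤ) (i j : Fin r),
      ERel r (eg (.Q a i) * eg (.Q b j) + eg (.Q b j) * eg (.Q a i)) 0
  | PQ : ∀ (a b : ℤ) (i j : Fin r),
      ERel r (eg (.P a i) * eg (.Q b j) + eg (.Q b j) * eg (.P a i))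
        (if i = j ∧ a = b then 1 else 0)
  | EFone : ERel r (eg .E * eg .F) 1
  | FEone : ERel r (eg .F * eg .E) 1

/-- The infinite-dimensional Clifford algebra `𝔈(r)`, presented by generators and
relations. -/
abbrev EAlg (r : ℕ) := RingQuot (ERel r)

/-- The generator `P_{a,i}` of `𝔈(r)`. -/
noncomputable def genP {r : ℕ} (a : ℤ) (i : Fin r) : EAlg r :=
  RingQuot.mkRingHom (ERel r) (eg (.P a i))

/-- The generator `Q_{a,i}` of `𝔈(r)`. -/
noncomputable def genQ {r : ℕ} (a : ℤ) (i : Fin r) : EAlg r :=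
  RingQuot.mkRingHom (ERel r) (eg (.Q a i))

/-- The generator `E` of `𝔈(r)`. -/
noncomputable def genE {r : ℕ} : EAlg r := RingQuot.mkRingHom (ERel r) (eg .E)

/-- The generator `F` of `𝔈(r)`. -/
noncomputable def genF {r : ℕ} : EAlg r := RingQuot.mkRingHom (ERel r) (eg .F)

/-- The ordered product `P_{a,I} := P_{a,a_k} ⋯ P_{a,a_0}` for `I = {a_0 < ⋯ < a_k}`. -/
noncomputable def genPI {r : ℕ} (a : ℤ) (I : Finset (Fin r)) : EAlg r :=
  ((I.sort (· ≤ ·)).reverse.map (genP a)).prod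

/-- The ordered product `Q_{a,I} := Q_{a,a_0} ⋯ Q_{a,a_k}` for `I = {a_0 < ⋯ < a_k}`. -/
noncomputable def genQI {r : ℕ} (a : ℤ) (I : Finset (Fin r)) : EAlg r :=
  ((I.sort (· ≤ ·)).map (genQ a)).prod

/-- The left ideal `𝔍(r)` of `𝔈(r)` generated by the `P_{a,i}` with `a > 0`. -/
noncomputable def JId (r : ℕ) : Ideal (EAlg r) :=
  Ideal.span {x | ∃ (a : ℤ) (i : Fin r), 0 < a ∧ x = genP a i}

/-- The quotient left `𝔈(r)`-module `Λ_r := 𝔈(r)/𝔍(r)`. -/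
abbrev LambdaMod (r : ℕ) := EAlg r ⧸ JId r

/-- Generators of the finite extended Clifford algebra `𝓔(r)`. -/
inductive SGen (r : ℕ) : Type
  | p (i : Fin r)
  | q (i : Fin r)
  | e
  | f

/-- A generator, viewed inside the free algebra. -/
noncomputable def sg {r : ℕ} (g : SGen r) : FreeAlgebra ℤ (SGen r) := FreeAlgebra.ι ℤ g

/-- `p_{[r]} = p_{r-1} ⋯ p_0` inside the free algebra. -/
noncomputable def sgPtop (r : ℕ) : FreeAlgebra ℤ (SGen r) :=
  ((List.finRange r).reverse.map (fun i => sg (.p i))).prod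

/-- `q_{[r]} = q_0 ⋯ q_{r-1}` inside the free algebra. -/
noncomputable def sgQtop (r : ℕ) : FreeAlgebra ℤ (SGen r) :=
  ((List.finRange r).map (fun i => sg (.q i))).prod

/-- The defining relations of `𝓔(r)`. -/
inductive SRel (r : ℕ) : FreeAlgebra ℤ (SGen r) → FreeAlgebra ℤ (SGen r) → Prop
  | psq : ∀ i : Fin r, SRel r (sg (.p i) * sg (.p i)) 0
  | qsq : ∀ i : Fin r, SRel r (sg (.q i) * sg (.q i)) 0
  | pp : ∀ i j : Fin r, SRel r (sg (.p i) * sg (.p j) + sg (.p j) * sg (.p i)) 0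
  | qq : ∀ i j : Fin r, SRel r (sg (.q i) * sg (.q j) + sg (.q j) * sg (.q i)) 0
  | pq : ∀ i j : Fin r,
      SRel r (sg (.p i) * sg (.q j) + sg (.q j) * sg (.p i)) (if i = j then 1 else 0)
  | pe : ∀ i : Fin r, SRel r (sg (.p i) * sg .e) 0
  | fq : ∀ i : Fin r, SRel r (sg .f * sg (.q i)) 0
  | fe : SRel r (sg .f * sg .e) 1
  | ef : SRel r (sg .e * sg .f) (sgPtop r * sgQtop r)

/-- The extended Clifford algebra `𝓔(r)`, presented by generators and relations. -/
abbrev SAlg (r : ℕ) := RingQuot (SRel r)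

/-- The generator `p_i` of `𝓔(r)`. -/
noncomputable def sgenp {r : ℕ} (i : Fin r) : SAlg r :=
  RingQuot.mkRingHom (SRel r) (sg (.p i))

/-- The generator `q_i` of `𝓔(r)`. -/
noncomputable def sgenq {r : ℕ} (i : Fin r) : SAlg r :=
  RingQuot.mkRingHom (SRel r) (sg (.q i))

/-- The generator `e` of `𝓔(r)`. -/
noncomputable def sgene {r : ℕ} : SAlg r := RingQuot.mkRingHom (SRel r) (sg .e)

/-- The generator `f` of `𝓔(r)`. -/
noncomputable def sgenf {r : ℕ} : SAlg r := RingQuot.mkRingHom (SRel r) (sg .f)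


structure Cl {A : Type*} [Ring A] {r : ℕ} (p q : Fin r → A) : Prop where
  psq : ∀ i, p i * p i = 0
  qsq : ∀ i, q i * q i = 0
  pp : ∀ i j, p i * p j + p j * p i = 0
  qq : ∀ i j, q i * q j + q j * q i = 0
  pq : ∀ i j, p i * q j + q j * p i = if i = j then 1 else 0

section clif
variable {A : Type*} [Ring A] {r : ℕ}

def eps (p q : Fin r → A) (l : List (Fin r)) : A :=
  (l.reverse.map p).prod * (l.map q).prod

theorem eps_concat (p q : Fin r → A) (l : List (Fin r)) (a : Fin r) :
    eps p q (l ++ [a]) = p a * eps p q l * q a := by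
  simp [eps, mul_assoc]

theorem list_zero_left (x : Fin r → A) (hsq : ∀ i, x i * x i = 0)
    (hx : ∀ i j, x i * x j + x j * x i = 0) (i : Fin r) (l : List (Fin r)) (hi : i ∈ l) :
    x i * (l.map x).prod = 0 := by
  induction l with
  | nil => simp at hi
  | cons a l ih =>
    rw [List.map_cons, List.prod_cons]
    by_cases h : i = a
    · subst h
      rw [← mul_assoc, hsq, zero_mul]
    · have h2 : i ∈ l := by simpa [h] using hi
      rw [← mul_assoc, eq_neg_of_add_eq_zero_left (hx i a), neg_mul, mul_assoc, ih h2]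
      simp

theorem list_zero_right (x : Fin r → A) (hsq : ∀ i, x i * x i = 0)
    (hx : ∀ i j, x i * x j + x j * x i = 0) (i : Fin r) (l : List (Fin r)) (hi : i ∈ l) :
    (l.map x).prod * x i = 0 := by
  induction l using List.reverseRecOn with
  | nil => simp at hi
  | append_singleton l a ih =>
    rw [List.map_append, List.prod_append]
    simp only [List.map_cons, List.map_nil, List.prod_cons, List.prod_nil, mul_one]
    by_cases h : i = a
    · subst h
      rw [mul_assoc, hsq, mul_zero]
    · have h2 : i ∈ l := by simpa [h] using hi
      rw [mul_assoc, eq_neg_of_add_eq_zero_left (hx a i), mul_neg, ← mul_assoc, ih h2]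
      simp

variable {p q : Fin r → A} (H : Cl p q)
include H

theorem Cl.pq_ne {i j : Fin r} (h : i ≠ j) : p i * q j + q j * p i = 0 := by
  rw [H.pq, if_neg h]

theorem Cl.pq_eq (i : Fin r) : p i * q i + q i * p i = 1 := by
  rw [H.pq, if_pos rfl]

theorem Cl.p_eps (a : Fin r) (l : List (Fin r)) (ha : a ∉ l) :
    p a * eps p q l = eps p q l * p a := by
  induction l using List.reverseRecOn with
  | nil => simp [eps]
  | append_singleton l b ih =>
    simp only [List.mem_append, List.mem_singleton, not_or] at ha
    rw [eps_concat]
    have h1 := ih ha.1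
    have h2 := H.pp a b
    have h3 := H.pq_ne ha.2
    rw [← sub_eq_zero] at h1 ⊢
    calc _ = (p a * p b + p b * p a) * eps p q l * q b
          - p b * (p a * eps p q l - eps p q l * p a) * q b
          - p b * eps p q l * (p a * q b + q b * p a) := by noncomm_ring
      _ = 0 := by rw [h1, h2, h3]; simp

theorem Cl.q_eps (a : Fin r) (l : List (Fin r)) (ha : a ∉ l) :
    q a * eps p q l = eps p q l * q a := by
  induction l using List.reverseRecOn with
  | nil => simp [eps]
  | append_singleton l b ih =>
    simp only [List.mem_append, List.mem_singleton, not_or] at ha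
    rw [eps_concat]
    have h1 := ih ha.1
    have h2 := H.qq a b
    have h3 := H.pq_ne (Ne.symm ha.2)
    rw [← sub_eq_zero] at h1 ⊢
    calc _ = (p b * q a + q a * p b) * eps p q l * q b
          - p b * (q a * eps p q l - eps p q l * q a) * q b
          - p b * eps p q l * (q a * q b + q b * q a) := by noncomm_ring
      _ = 0 := by rw [h1, h2, h3]; simp

theorem Cl.eps_snoc (l : List (Fin r)) (a : Fin r) (ha : a ∉ l) :
    eps p q (l ++ [a]) = eps p q l * (p a * q a) := by
  rw [eps_concat, H.p_eps a l ha, mul_assoc]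

theorem Cl.eps_smul {V : Type*} [AddCommGroup V] [Module A V] (v : V)
    (hv : ∀ i, p i • v = 0) (l : List (Fin r)) (hl : l.Nodup) : eps p q l • v = v := by
  induction l using List.reverseRecOn with
  | nil => simp [eps]
  | append_singleton l b ih =>
    have hb : b ∉ l := by
      intro h
      have := List.nodup_append.1 hl
      exact this.2.2 b h b (by simp) rfl
    have hl' : l.Nodup := (List.nodup_append.1 hl).1
    rw [H.eps_snoc l b hb, mul_smul, eq_sub_of_add_eq (H.pq_eq b), sub_smul, mul_smul, hv,
      smul_zero, sub_zero, one_smul, ih hl']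

theorem Cl.generate (K : AddSubgroup A) (hK : ∀ i s, s ∈ K → q i * s ∈ K)
    (l : List (Fin r)) (hl : l.Nodup) (h : ∀ s, eps p q l * s ∈ K) (s : A) : s ∈ K := by
  induction l using List.reverseRecOn generalizing s with
  | nil => simpa [eps] using h s
  | append_singleton l b ih =>
    have hb : b ∉ l := by
      intro h
      have := List.nodup_append.1 hl
      exact this.2.2 b h b (by simp) rfl
    have hl' : l.Nodup := (List.nodup_append.1 hl).1
    refine ih hl' (fun s => ?_) s
    rw [H.eps_snoc l b hb] at h
    have e1 : eps p q l * s = eps p q l * (p b * q b) * s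
        + q b * (eps p q l * (p b * q b) * (p b * s)) := by
      have h1 := H.q_eps b l hb
      have h2 : q b * (p b * q b) * p b = q b * p b := by
        rw [eq_sub_of_add_eq (H.pq_eq b)]
        have := H.qsq b
        calc _ = q b * p b - (q b * q b) * p b * p b := by noncomm_ring
          _ = _ := by rw [this]; simp
      calc _ = eps p q l * (p b * q b + q b * p b) * s := by rw [H.pq_eq]; simp
        _ = eps p q l * (p b * q b) * s + eps p q l * (q b * p b) * s := by noncomm_ring
        _ = eps p q l * (p b * q b) * s + (eps p q l * q b) * ((p b * q b) * (p b * s)) := by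
          rw [← h2]; noncomm_ring
        _ = _ := by rw [← h1]; noncomm_ring
    rw [e1]
    exact K.add_mem (h s) (hK b _ (h _))

end clif

section sigma
variable {A : Type*} [Ring A] {r : ℕ}

def sigL (p q : Fin r → A) (e f : A) (l : List (Fin r)) (x : A) : A :=
  l.foldr (fun i y => y - q i * y * p i) (e * x * f)

variable {p q : Fin r → A} (H : Cl p q) {e f : A} (pe : ∀ i, p i * e = 0)
  (fq : ∀ i, f * q i = 0) (fe : f * e = 1)

include pe fe in
theorem sigL_e (l : List (Fin r)) (x : A) : sigL p q e f l x * e = e * x := by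
  induction l with
  | nil => simp [sigL, mul_assoc, fe]
  | cons a l ih =>
    have : sigL p q e f (a :: l) x = sigL p q e f l x - q a * sigL p q e f l x * p a := rfl
    rw [this, sub_mul, mul_assoc _ (p a), pe, mul_zero, sub_zero, ih]

include H pe fq in
theorem sigL_main (l : List (Fin r)) (hl : l.Nodup) (x : A) (j : Fin r) :
    (j ∉ l → p j * sigL p q e f l x = 0 ∧ sigL p q e f l x * q j = 0) ∧
    (j ∈ l → p j * sigL p q e f l x + sigL p q e f l x * p j = 0 ∧
      q j * sigL p q e f l x + sigL p q e f l x * q j = 0) := by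
  induction l with
  | nil =>
    refine ⟨fun _ => ⟨?_, ?_⟩, fun h => by simp at h⟩
    · simp [sigL, ← mul_assoc, pe]
    · simp [sigL, mul_assoc, fq]
  | cons a l ih =>
    have h0 : sigL p q e f (a :: l) x = sigL p q e f l x - q a * sigL p q e f l x * p a := rfl
    rw [h0]
    rw [List.nodup_cons] at hl
    have ih := ih hl.2
    generalize sigL p q e f l x = y at ih ⊢
    by_cases hja : j = a
    · subst hja
      refine ⟨fun h => by simp at h, fun _ => ?_⟩
      obtain ⟨h1, h2⟩ := ih.1 hl.1
      have h3 := H.pq_eq j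
      have h4 := H.psq j
      have h5 := H.qsq j
      constructor
      · calc _ = p j * y - (p j * q j + q j * p j) * y * p j + q j * (p j * y) * p j
              + y * p j - q j * y * (p j * p j) := by noncomm_ring
          _ = 0 := by rw [h1, h3, h4]; simp
      · calc _ = q j * y - (q j * q j) * y * p j + y * q j
              - q j * y * (p j * q j + q j * p j) + q j * (y * q j) * p j := by noncomm_ring
          _ = 0 := by rw [h2, h3, h5]; simp
    · have A1 := H.pq_ne hja
      have A2 := H.pq_ne (Ne.symm hja)
      have A3 := H.pp j a
      have A4 := H.qq j a
      constructor
      · intro h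
        obtain ⟨h1, h2⟩ := ih.1 (by simp at h; tauto)
        constructor
        · calc _ = p j * y - (p j * q a + q a * p j) * y * p a + q a * (p j * y) * p a := by
                noncomm_ring
            _ = 0 := by rw [h1, A1]; simp
        · calc _ = y * q j - q a * y * (p a * q j + q j * p a) + q a * (y * q j) * p a := by
                noncomm_ring
            _ = 0 := by rw [h2, A2]; simp
      · intro h
        obtain ⟨h1, h2⟩ := ih.2 (by simp at h; tauto)
        constructor
        · calc _ = (p j * y + y * p j) - (p j * q a + q a * p j) * y * p a
                + q a * (p j * y + y * p j) * p a - q a * y * (p j * p a + p a * p j) := by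
                noncomm_ring
            _ = 0 := by rw [h1, A1, A3]; simp
        · calc _ = (q j * y + y * q j) - (q j * q a + q a * q j) * y * p a
                + q a * (q j * y + y * q j) * p a - q a * y * (p a * q j + q j * p a) := by
                noncomm_ring
            _ = 0 := by rw [h2, A2, A4]; simp

end sigma

section ext
variable {A : Type*} [Ring A] {r : ℕ}

/-- All the relations of the extended Clifford algebra. -/
structure XCl (p q : Fin r → A) (e f : A) : Prop where
  cl : Cl p q
  pe : ∀ i, p i * e = 0
  fq : ∀ i, f * q i = 0
  fe : f * e = 1
  ef : e * f = eps p q (List.finRange r)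

def sig (p q : Fin r → A) (e f : A) (x : A) : A := sigL p q e f (List.finRange r) x

variable {p q : Fin r → A} {e f : A} (H : XCl p q e f)
include H

theorem XCl.generate (K : AddSubgroup A) (hK : ∀ i s, s ∈ K → q i * s ∈ K)
    (h : ∀ s, e * s ∈ K) (s : A) : s ∈ K := by
  refine H.cl.generate K hK (List.finRange r) (List.nodup_finRange r) (fun s => ?_) s
  rw [← H.ef, mul_assoc]
  exact h _

theorem XCl.sig_e (x : A) : sig p q e f x * e = e * x := sigL_e H.pe H.fe _ x

theorem XCl.sig_p (x : A) (j : Fin r) : p j * sig p q e f x + sig p q e f x * p j = 0 :=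
  ((sigL_main H.cl H.pe H.fq (List.finRange r) (List.nodup_finRange r) x j).2 (by simp)).1

theorem XCl.sig_q (x : A) (j : Fin r) : q j * sig p q e f x + sig p q e f x * q j = 0 :=
  ((sigL_main H.cl H.pe H.fq (List.finRange r) (List.nodup_finRange r) x j).2 (by simp)).2

theorem XCl.zero_of (z : A) (hq : ∀ i, z * q i = q i * z) (he : z * e = 0) : z = 0 := by
  have := H.generate (AddMonoidHom.mulLeft z).ker (fun i s hs => by
    simp only [AddMonoidHom.mem_ker, AddMonoidHom.coe_mulLeft] at hs ⊢
    rw [← mul_assoc, hq, mul_assoc, hs, mul_zero]) (fun s => by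
    simp only [AddMonoidHom.mem_ker, AddMonoidHom.coe_mulLeft]
    rw [← mul_assoc, he, zero_mul]) 1
  simpa using this

theorem XCl.sig_mul_q (x y : A) (i : Fin r) :
    sig p q e f x * sig p q e f y * q i = q i * (sig p q e f x * sig p q e f y) := by
  have h1 := H.sig_q x i
  have h2 := H.sig_q y i
  rw [← sub_eq_zero]
  calc _ = sig p q e f x * (q i * sig p q e f y + sig p q e f y * q i)
      - (q i * sig p q e f x + sig p q e f x * q i) * sig p q e f y := by noncomm_ring
    _ = 0 := by rw [h1, h2]; simp

theorem XCl.sig_mul_e (x y : A) :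
    sig p q e f x * sig p q e f y * e = e * (x * y) := by
  rw [mul_assoc, H.sig_e, ← mul_assoc, H.sig_e, mul_assoc]

theorem XCl.sig_sq (x : A) (h : x * x = 0) : sig p q e f x * sig p q e f x = 0 := by
  refine H.zero_of _ (H.sig_mul_q x x) ?_
  rw [H.sig_mul_e, h, mul_zero]

theorem XCl.sig_anti (x y : A) (c : ℤ) (h : x * y + y * x = c) :
    sig p q e f x * sig p q e f y + sig p q e f y * sig p q e f x = c := by
  rw [← sub_eq_zero]
  refine H.zero_of _ (fun i => ?_) ?_
  · rw [sub_mul, add_mul, H.sig_mul_q, H.sig_mul_q, mul_sub, mul_add, (Int.cast_commute c (q i)).eq]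
  · rw [sub_mul, add_mul, H.sig_mul_e, H.sig_mul_e, ← mul_add, h, (Int.cast_commute c e).eq, sub_self]

/-- tower of Clifford generators -/
theorem XCl.tower_sq (x : A) (h : x * x = 0) (n : ℕ) :
    ((sig p q e f)^[n] x) * ((sig p q e f)^[n] x) = 0 := by
  induction n with
  | zero => simpa using h
  | succ n ih =>
    rw [Function.iterate_succ_apply']
    exact H.sig_sq _ ih

theorem XCl.tower_anti (x y : A) (c : ℤ) (h : x * y + y * x = c)
    (hx : (∃ i, x = p i) ∨ ∃ i, x = q i) (hy : (∃ i, y = p i) ∨ ∃ i, y = q i) (n m : ℕ) :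
    ((sig p q e f)^[n] x) * ((sig p q e f)^[m] y) + ((sig p q e f)^[m] y) * ((sig p q e f)^[n] x)
      = ((if n = m then c else 0 : ℤ) : A) := by
  induction n generalizing m with
  | zero =>
    cases m with
    | zero => simpa using h
    | succ m =>
      rw [Function.iterate_succ_apply']
      simp only [Function.iterate_zero, id]
      rw [if_neg (by omega), Int.cast_zero]
      rcases hx with ⟨i, rfl⟩ | ⟨i, rfl⟩
      · exact H.sig_p _ i
      · exact H.sig_q _ i
  | succ n ih =>
    cases m with
    | zero =>
      rw [Function.iterate_succ_apply']
      simp only [Function.iterate_zero, id]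
      rw [if_neg (by omega), Int.cast_zero, add_comm]
      rcases hy with ⟨i, rfl⟩ | ⟨i, rfl⟩
      · exact H.sig_p _ i
      · exact H.sig_q _ i
    | succ m =>
      rw [Function.iterate_succ_apply', Function.iterate_succ_apply']
      rw [H.sig_anti _ _ _ (ih m)]
      simp

/-- `σ^n(x) e^n = e^n x` -/
theorem XCl.tower_e (x : A) (n : ℕ) : ((sig p q e f)^[n] x) * e ^ n = e ^ n * x := by
  induction n with
  | zero => simp
  | succ n ih =>
    rw [Function.iterate_succ_apply', pow_succ', ← mul_assoc, H.sig_e, mul_assoc, ih, mul_assoc]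

theorem XCl.f_e_pow (n : ℕ) : f ^ n * e ^ n = 1 := by
  induction n with
  | zero => simp
  | succ n ih => rw [pow_succ, pow_succ', mul_assoc, ← mul_assoc f, H.fe, one_mul, ih]

end ext

section pres
variable {r : ℕ}

theorem sCl : Cl (sgenp (r := r)) sgenq where
  psq i := by simpa [sgenp] using RingQuot.mkRingHom_rel (SRel.psq i)
  qsq i := by simpa [sgenq] using RingQuot.mkRingHom_rel (SRel.qsq i)
  pp i j := by simpa [sgenp] using RingQuot.mkRingHom_rel (SRel.pp i j)
  qq i j := by simpa [sgenq] using RingQuot.mkRingHom_rel (SRel.qq i j)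
  pq i j := by
    have := RingQuot.mkRingHom_rel (SRel.pq i j)
    rw [map_add, map_mul, map_mul] at this
    refine this.trans ?_
    split_ifs <;> simp

theorem sX : XCl (sgenp (r := r)) sgenq sgene sgenf where
  cl := sCl
  pe i := by simpa [sgenp, sgene] using RingQuot.mkRingHom_rel (SRel.pe i)
  fq i := by simpa [sgenf, sgenq] using RingQuot.mkRingHom_rel (SRel.fq i)
  fe := by simpa [sgenf, sgene] using RingQuot.mkRingHom_rel (SRel.fe (r := r))
  ef := by
    have := RingQuot.mkRingHom_rel (SRel.ef (r := r))
    rw [map_mul, map_mul, sgPtop, sgQtop, map_list_prod, map_list_prod, List.map_map,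
      List.map_map] at this
    exact this

theorem gPQ (a b : ℤ) (i j : Fin r) : genP a i * genQ b j + genQ b j * genP a i =
    if i = j ∧ a = b then 1 else 0 := by
  have := RingQuot.mkRingHom_rel (ERel.PQ a b i j)
  rw [map_add, map_mul, map_mul] at this
  refine this.trans ?_
  split_ifs <;> simp

theorem gPP (a b : ℤ) (i j : Fin r) : genP a i * genP b j + genP b j * genP a i = 0 := by
  simpa [genP] using RingQuot.mkRingHom_rel (ERel.PP a b i j)

theorem gQQ (a b : ℤ) (i j : Fin r) : genQ a i * genQ b j + genQ b j * genQ a i = 0 := by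
  simpa [genQ] using RingQuot.mkRingHom_rel (ERel.QQ a b i j)

theorem eCl (a : ℤ) : Cl (genP (r := r) a) (genQ a) where
  psq i := by simpa [genP] using RingQuot.mkRingHom_rel (ERel.Psq a i)
  qsq i := by simpa [genQ] using RingQuot.mkRingHom_rel (ERel.Qsq a i)
  pp i j := gPP a a i j
  qq i j := gQQ a a i j
  pq i j := by simpa using gPQ a a i j

theorem gEP (a : ℤ) (i : Fin r) : genE * genP a i = genP (a - 1) i * genE := by
  simpa [genE, genP] using RingQuot.mkRingHom_rel (ERel.EP a i)

theorem gEQ (a : ℤ) (i : Fin r) : genE * genQ a i = genQ (a - 1) i * genE := by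
  simpa [genE, genQ] using RingQuot.mkRingHom_rel (ERel.EQ a i)

theorem gEF : (genE : EAlg r) * genF = 1 := by
  simpa [genE, genF] using RingQuot.mkRingHom_rel (ERel.EFone (r := r))

theorem gFE : (genF : EAlg r) * genE = 1 := by
  simpa [genE, genF] using RingQuot.mkRingHom_rel (ERel.FEone (r := r))

theorem gFP (a : ℤ) (i : Fin r) : genP a i * genF = genF * genP (a - 1) i := by
  calc genP a i * genF = (genF * genE) * genP a i * genF := by rw [gFE, one_mul]
    _ = genF * (genE * genP a i) * genF := by rw [mul_assoc genF]
    _ = genF * genP (a - 1) i * (genE * genF) := by rw [gEP]; simp only [mul_assoc]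
    _ = _ := by rw [gEF, mul_one]

theorem gFQ (a : ℤ) (i : Fin r) : genQ a i * genF = genF * genQ (a - 1) i := by
  calc genQ a i * genF = (genF * genE) * genQ a i * genF := by rw [gFE, one_mul]
    _ = genF * (genE * genQ a i) * genF := by rw [mul_assoc genF]
    _ = genF * genQ (a - 1) i * (genE * genF) := by rw [gEQ]; simp only [mul_assoc]
    _ = _ := by rw [gEF, mul_one]

theorem gFPn (a : ℤ) (i : Fin r) (n : ℕ) :
    genP a i * genF ^ n = genF ^ n * genP (a - n) i := by
  induction n with
  | zero => simp
  | succ n ih =>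
    rw [pow_succ, ← mul_assoc, ih, mul_assoc, gFP, ← mul_assoc]
    congr 2; push_cast; ring

theorem gFQn (a : ℤ) (i : Fin r) (n : ℕ) :
    genQ a i * genF ^ n = genF ^ n * genQ (a - n) i := by
  induction n with
  | zero => simp
  | succ n ih =>
    rw [pow_succ, ← mul_assoc, ih, mul_assoc, gFQ, ← mul_assoc]
    congr 2; push_cast; ring

theorem list_E (x y : Fin r → EAlg r) (h : ∀ i, genE * x i = y i * genE) (l : List (Fin r)) :
    genE * (l.map x).prod = (l.map y).prod * genE := by
  induction l with
  | nil => simp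
  | cons a l ih => simp only [List.map_cons, List.prod_cons]; rw [← mul_assoc, h, mul_assoc, ih, mul_assoc]

noncomputable abbrev epsE (r : ℕ) (a : ℤ) : EAlg r := eps (genP a) (genQ a) (List.finRange r)

theorem epsE_E : epsE r 0 * genE = genE * epsE r 1 := by
  unfold epsE eps
  rw [mul_assoc, ← list_E (genQ 1) (genQ 0) (fun i => by simpa using gEQ 1 i), ← mul_assoc,
    ← list_E (genP 1) (genP 0) (fun i => by simpa using gEP 1 i), mul_assoc]

theorem P_epsE (i : Fin r) : genP 0 i * epsE r 0 = 0 := by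
  unfold epsE eps
  rw [← mul_assoc, list_zero_left _ (eCl 0).psq (eCl 0).pp _ _ (by simp), zero_mul]

theorem epsE_Q (i : Fin r) : epsE r 0 * genQ 0 i = 0 := by
  unfold epsE eps
  rw [mul_assoc, list_zero_right _ (eCl 0).qsq (eCl 0).qq _ _ (by simp), mul_zero]

theorem PI_QI : (genPI 0 Finset.univ * genQI 0 Finset.univ : EAlg r) = epsE r 0 := by
  unfold genPI genQI epsE eps
  rw [Fin.sort_univ]

/-- class of `x` in `Λ` -/
noncomputable abbrev lm (x : EAlg r) : LambdaMod r := Submodule.Quotient.mk x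

theorem lm_P (a : ℤ) (ha : 0 < a) (i : Fin r) : genP a i ∈ JId r :=
  Ideal.subset_span ⟨a, i, ha, rfl⟩

theorem lm_zero {x : EAlg r} (h : x ∈ JId r) : lm x = 0 :=
  (Submodule.Quotient.mk_eq_zero _).2 h

/-- right multiplication -/
noncomputable def rmul (y : EAlg r) (h : ∀ a i, 0 < a → genP a i * y ∈ JId r) :
    Module.End (EAlg r) (LambdaMod r) :=
  Submodule.liftQ (JId r) (LinearMap.toSpanSingleton (EAlg r) (LambdaMod r) (lm y)) (by
    unfold JId
    refine Submodule.span_le.2 ?_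
    rintro _ ⟨a, i, ha, rfl⟩
    change genP a i • lm y = 0
    exact lm_zero (h a i ha))

theorem rmul_mk (y : EAlg r) (h) (x : EAlg r) : rmul y h (lm x) = lm (x * y) := rfl

theorem end_ext {φ ψ : Module.End (EAlg r) (LambdaMod r)} (h : φ (lm 1) = ψ (lm 1)) : φ = ψ := by
  apply LinearMap.ext
  intro v
  obtain ⟨x, rfl⟩ := Submodule.Quotient.mk_surjective _ v
  have : (Submodule.Quotient.mk x : LambdaMod r) = x • lm 1 := by
    rw [lm, ← Submodule.Quotient.mk_smul, smul_eq_mul, mul_one]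
  rw [this, map_smul, map_smul, h]

theorem anti_mem {x y : EAlg r} (h : x * y + y * x = 0) (hx : x ∈ JId r) : x * y ∈ JId r := by
  rw [eq_neg_of_add_eq_zero_left h]
  exact neg_mem ((JId r).mul_mem_left _ hx)

noncomputable def endP (i : Fin r) : Module.End (EAlg r) (LambdaMod r) :=
  rmul (genP 0 i) (fun a j ha => anti_mem (gPP a 0 j i) (lm_P a ha j))

noncomputable def endQ (i : Fin r) : Module.End (EAlg r) (LambdaMod r) :=
  rmul (genQ 0 i) (fun a j ha => anti_mem ((gPQ a 0 j i).trans (if_neg (by omega))) (lm_P a ha j))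

noncomputable def endE : Module.End (EAlg r) (LambdaMod r) :=
  rmul genE (fun a j ha => by
    have := gEP (a + 1) j
    rw [add_sub_cancel_right] at this
    rw [← this]
    exact (JId r).mul_mem_left _ (lm_P _ (by omega) j))

theorem epsE_sub (a : ℤ) (ha : 0 < a) : epsE r a - 1 ∈ JId r := by
  have h := (eCl a).eps_smul (V := LambdaMod r) (lm 1) (fun i => by
    rw [lm, ← Submodule.Quotient.mk_smul, smul_eq_mul, mul_one]
    exact lm_zero (lm_P a ha i)) (List.finRange r) (List.nodup_finRange r)
  rw [lm, ← Submodule.Quotient.mk_smul, smul_eq_mul, mul_one] at h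
  exact (Submodule.Quotient.eq _).1 h

theorem list_anti_mem {A : Type*} [Ring A] (J : Ideal A) (x : Fin r → A) (l : List (Fin r)) (a : A)
    (h : ∀ i, a * x i + x i * a = 0) (y : A) (hy : a * y ∈ J) :
    a * ((l.map x).prod * y) ∈ J := by
  induction l with
  | nil => simpa using hy
  | cons b l ih =>
    simp only [List.map_cons, List.prod_cons]
    rw [mul_assoc, ← mul_assoc, eq_neg_of_add_eq_zero_left (h b), neg_mul, mul_assoc]
    exact neg_mem (J.mul_mem_left _ ih)

noncomputable def endF : Module.End (EAlg r) (LambdaMod r) :=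
  rmul (genF * epsE r 0) (fun a j ha => by
    rw [← mul_assoc, gFP, mul_assoc]
    refine (JId r).mul_mem_left _ ?_
    by_cases h : a = 1
    · subst h
      rw [sub_self, P_epsE]
      exact zero_mem _
    · have ha' : 0 < a - 1 := by omega
      unfold epsE eps
      refine list_anti_mem _ _ _ _ (fun i => gPP _ _ _ _) _ ?_
      rw [← mul_one (List.prod (List.map (genQ 0) _))]
      refine list_anti_mem _ _ _ _
        (fun i => (gPQ _ _ _ _).trans (if_neg (by omega))) _ ?_
      simpa using lm_P _ ha' j)

noncomputable def genMap : SGen r → (Module.End (EAlg r) (LambdaMod r))ᵐᵒᵖ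
  | .p i => .op (endP i)
  | .q i => .op (endQ i)
  | .e => .op endE
  | .f => .op endF

theorem endP_mk (i : Fin r) (x : EAlg r) : endP i (lm x) = lm (x * genP 0 i) := rfl
theorem endQ_mk (i : Fin r) (x : EAlg r) : endQ i (lm x) = lm (x * genQ 0 i) := rfl
theorem endE_mk (x : EAlg r) : endE (lm x) = lm (x * genE) := rfl
theorem endF_mk (x : EAlg r) : endF (lm x) = lm (x * (genF * epsE r 0)) := rfl

theorem lm_add (x y : EAlg r) : lm x + lm y = lm (x + y) := rfl

theorem op_list_prod (l : List (Fin r)) (g : Fin r → Module.End (EAlg r) (LambdaMod r))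
    (y : Fin r → EAlg r) (h : ∀ i x, g i (lm x) = lm (x * y i)) (x : EAlg r) :
    ((l.map (fun i => MulOpposite.op (g i))).prod).unop (lm x) = lm (x * (l.map y).prod) := by
  induction l generalizing x with
  | nil => simp
  | cons a l ih =>
    simp only [List.map_cons, List.prod_cons, MulOpposite.unop_mul, MulOpposite.unop_op,
      Module.End.mul_apply]
    rw [h, ih, mul_assoc]

theorem relMap ⦃x y : FreeAlgebra ℤ (SGen r)⦄ (h : SRel r x y) :
    FreeAlgebra.lift ℤ (genMap (r := r)) x = FreeAlgebra.lift ℤ (genMap (r := r)) y := by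
  apply MulOpposite.unop_injective
  apply end_ext
  cases h with
  | psq i =>
    simp only [sg, map_mul, map_zero, FreeAlgebra.lift_ι_apply, genMap, MulOpposite.unop_mul,
      MulOpposite.unop_op, Module.End.mul_apply, endP_mk]
    rw [mul_assoc, (eCl 0).psq]; simp
  | qsq i =>
    simp only [sg, map_mul, map_zero, FreeAlgebra.lift_ι_apply, genMap, MulOpposite.unop_mul,
      MulOpposite.unop_op, Module.End.mul_apply, endQ_mk]
    rw [mul_assoc, (eCl 0).qsq]; simp
  | pp i j =>
    simp only [sg, map_mul, map_zero, map_add, FreeAlgebra.lift_ι_apply, genMap,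
      MulOpposite.unop_mul, MulOpposite.unop_add, LinearMap.add_apply,
      MulOpposite.unop_op, Module.End.mul_apply, endP_mk]
    rw [lm_add, mul_assoc, mul_assoc, ← mul_add, (eCl 0).pp]; simp
  | qq i j =>
    simp only [sg, map_mul, map_zero, map_add, FreeAlgebra.lift_ι_apply, genMap,
      MulOpposite.unop_mul, MulOpposite.unop_add, LinearMap.add_apply,
      MulOpposite.unop_op, Module.End.mul_apply, endQ_mk]
    rw [lm_add, mul_assoc, mul_assoc, ← mul_add, (eCl 0).qq]; simp
  | pq i j =>
    simp only [sg, map_mul, map_add, FreeAlgebra.lift_ι_apply, genMap,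
      MulOpposite.unop_mul, MulOpposite.unop_add, LinearMap.add_apply,
      MulOpposite.unop_op, Module.End.mul_apply, endQ_mk, endP_mk]
    rw [lm_add, mul_assoc, mul_assoc, ← mul_add, (eCl 0).pq]
    split_ifs <;> simp
  | pe i =>
    simp only [sg, map_mul, map_zero, FreeAlgebra.lift_ι_apply, genMap, MulOpposite.unop_mul,
      MulOpposite.unop_op, Module.End.mul_apply, endP_mk, endE_mk]
    have := gEP 1 i
    rw [sub_self] at this
    rw [one_mul, ← this, lm_zero ((JId r).mul_mem_left _ (lm_P 1 one_pos i))]; simp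
  | fq i =>
    simp only [sg, map_mul, map_zero, FreeAlgebra.lift_ι_apply, genMap, MulOpposite.unop_mul,
      MulOpposite.unop_op, Module.End.mul_apply, endF_mk, endQ_mk]
    rw [one_mul, mul_assoc, epsE_Q]; simp
  | fe =>
    simp only [sg, map_mul, map_one, FreeAlgebra.lift_ι_apply, genMap, MulOpposite.unop_mul,
      MulOpposite.unop_op, Module.End.mul_apply, endF_mk, endE_mk, MulOpposite.unop_one,
      Module.End.one_apply]
    rw [one_mul, mul_assoc, epsE_E, ← mul_assoc, gFE, one_mul]
    exact (Submodule.Quotient.eq _).2 (epsE_sub 1 one_pos)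
  | ef =>
    simp only [sg, sgPtop, sgQtop, map_mul, map_list_prod, List.map_map, Function.comp_def,
      FreeAlgebra.lift_ι_apply, genMap, MulOpposite.unop_mul,
      MulOpposite.unop_op, Module.End.mul_apply, endF_mk, endE_mk]
    rw [op_list_prod _ _ _ endP_mk, op_list_prod _ _ _ endQ_mk, one_mul, one_mul, ← mul_assoc,
      gEF, one_mul]
    rfl

noncomputable def Phi (r : ℕ) : SAlg r →+* (Module.End (EAlg r) (LambdaMod r))ᵐᵒᵖ :=
  RingQuot.lift ⟨(FreeAlgebra.lift ℤ (genMap (r := r))).toRingHom, relMap⟩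

theorem Phi_mk (x : FreeAlgebra ℤ (SGen r)) :
    Phi r (RingQuot.mkRingHom (SRel r) x) = FreeAlgebra.lift ℤ genMap x :=
  RingQuot.lift_mkRingHom_apply _ _ _

theorem Phi_p (i : Fin r) : Phi r (sgenp i) = .op (endP i) := by
  rw [sgenp, Phi_mk, sg, FreeAlgebra.lift_ι_apply, genMap]
theorem Phi_q (i : Fin r) : Phi r (sgenq i) = .op (endQ i) := by
  rw [sgenq, Phi_mk, sg, FreeAlgebra.lift_ι_apply, genMap]
theorem Phi_e : Phi r sgene = .op endE := by
  rw [sgene, Phi_mk, sg, FreeAlgebra.lift_ι_apply, genMap]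
theorem Phi_f : Phi r sgenf = .op endF := by
  rw [sgenf, Phi_mk, sg, FreeAlgebra.lift_ι_apply, genMap]

end pres

section surj
variable {r : ℕ}

theorem anti_assoc {A : Type*} [Ring A] {q x s : A} (h : q * x + x * q = 0) :
    x * (q * s) = 0 - q * (x * s) := by
  rw [← mul_assoc, eq_neg_of_add_eq_zero_right h, zero_sub, neg_mul, mul_assoc]

theorem XEF (n : ℕ) : (genE ^ n * genF ^ n : EAlg r) = 1 := by
  induction n with
  | zero => simp
  | succ n ih => rw [pow_succ, pow_succ', mul_assoc, ← mul_assoc genE, gEF, one_mul, ih]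

noncomputable def brk (s : SAlg r) : LambdaMod r := (Phi r s).unop (lm 1)

theorem brk_add (s t : SAlg r) : brk (s + t) = brk s + brk t := by
  simp [brk]

theorem brk_sub (s t : SAlg r) : brk (s - t) = brk s - brk t := by
  simp [brk]

theorem brk_zero : brk (0 : SAlg r) = 0 := by
  simp [brk]

theorem smul_lm (x : EAlg r) : x • lm 1 = lm x := by
  rw [lm, ← Submodule.Quotient.mk_smul, smul_eq_mul, mul_one]

theorem brk_mul (x : EAlg r) (g s : SAlg r) (h : brk g = lm x) : brk (g * s) = x • brk s := by
  unfold brk at h ⊢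
  rw [map_mul, MulOpposite.unop_mul, Module.End.mul_apply, h, ← smul_lm x, map_smul]

theorem brk_p (i : Fin r) (s : SAlg r) : brk (sgenp i * s) = genP 0 i • brk s :=
  brk_mul _ _ _ (by rw [brk, Phi_p, MulOpposite.unop_op, endP_mk, one_mul])
theorem brk_q (i : Fin r) (s : SAlg r) : brk (sgenq i * s) = genQ 0 i • brk s :=
  brk_mul _ _ _ (by rw [brk, Phi_q, MulOpposite.unop_op, endQ_mk, one_mul])
theorem brk_e (s : SAlg r) : brk (sgene * s) = (genE : EAlg r) • brk s :=
  brk_mul _ _ _ (by rw [brk, Phi_e, MulOpposite.unop_op, endE_mk, one_mul])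

noncomputable abbrev tow (n : ℕ) (x : SAlg r) : SAlg r := (sig sgenp sgenq sgene sgenf)^[n] x

theorem brk_tow (X : ℤ → EAlg r) (x : SAlg r) (h0 : ∀ s, brk (x * s) = X 0 • brk s)
    (hQ : ∀ a, a < 0 → ∀ i, X a * genQ 0 i + genQ 0 i * X a = 0)
    (hE : ∀ a, genE * X a = X (a - 1) * genE) (n : ℕ) (s : SAlg r) :
    brk (tow n x * s) = X (-n) • brk s := by
  induction n generalizing s with
  | zero => simpa [tow] using h0 s
  | succ n ih =>
    let z : SAlg r →+ LambdaMod r :=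
      { toFun := fun s => brk (tow (n + 1) x * s) - X (-(n + 1 : ℕ)) • brk s
        map_zero' := by simp [brk_zero]
        map_add' := by
          intro a b
          rw [mul_add, brk_add, brk_add, smul_add]; abel }
    have hz : ∀ s, z s = brk (tow (n + 1) x * s) - X (-(n + 1 : ℕ)) • brk s := fun _ => rfl
    have := sX.generate z.ker (fun i s hs => by
      rw [AddMonoidHom.mem_ker] at hs ⊢
      have h1 : z (sgenq i * s) = - (genQ 0 i • z s) := by
        rw [hz, hz]
        have a1 : tow (n + 1) x * (sgenq i * s) = 0 - sgenq i * (tow (n + 1) x * s) := by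
          rw [tow, Function.iterate_succ_apply']
          exact anti_assoc (sX.sig_q _ i)
        have a2 := hQ (-(n + 1 : ℕ)) (by omega) i
        rw [a1, brk_sub, brk_zero, brk_q, brk_q, ← mul_smul, eq_neg_of_add_eq_zero_left a2,
          smul_sub, neg_smul, mul_smul]
        abel
      rw [h1, hs, smul_zero, neg_zero]) (fun s => by
      rw [AddMonoidHom.mem_ker, hz, tow, Function.iterate_succ_apply', ← mul_assoc, sX.sig_e,
        mul_assoc, brk_e, ih, brk_e, ← mul_smul, ← mul_smul, hE]
      rw [sub_eq_zero]
      congr 3; push_cast; ring) s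
    rw [AddMonoidHom.mem_ker, hz, sub_eq_zero] at this
    exact this

theorem brk_towP (i : Fin r) (n : ℕ) (s : SAlg r) :
    brk (tow n (sgenp i) * s) = genP (-n) i • brk s :=
  brk_tow (fun a => genP a i) _ (brk_p i)
    (fun a ha j => (gPQ a 0 i j).trans (if_neg (by omega))) (fun a => gEP a i) n s

theorem brk_towQ (i : Fin r) (n : ℕ) (s : SAlg r) :
    brk (tow n (sgenq i) * s) = genQ (-n) i • brk s :=
  brk_tow (fun a => genQ a i) _ (brk_q i)
    (fun a ha j => gQQ a 0 i j) (fun a => gEQ a i) n s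

def isT (v : LambdaMod r) : Prop := ∃ (n : ℕ) (s : SAlg r), v = (genF ^ n : EAlg r) • brk s

theorem F_raise (n : ℕ) (s : SAlg r) : ((genF ^ n : EAlg r) • brk s : LambdaMod r) =
    (genF ^ (n + 1) : EAlg r) • brk (sgene * s) := by
  rw [brk_e, ← mul_smul, pow_succ, mul_assoc, gFE, mul_one]

theorem F_raise' (n k : ℕ) (s : SAlg r) : ∃ t, ((genF ^ n : EAlg r) • brk s : LambdaMod r) =
    (genF ^ (n + k) : EAlg r) • brk t := by
  induction k with
  | zero => exact ⟨s, rfl⟩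
  | succ k ih =>
    obtain ⟨t, ht⟩ := ih
    exact ⟨_, ht.trans (F_raise _ _)⟩

theorem isT_add {v w : LambdaMod r} (hv : isT v) (hw : isT w) : isT (v + w) := by
  obtain ⟨n, s, rfl⟩ := hv
  obtain ⟨m, t, rfl⟩ := hw
  obtain ⟨s', hs⟩ := F_raise' n m s
  obtain ⟨t', ht⟩ := F_raise' m n t
  refine ⟨n + m, s' + t', ?_⟩
  rw [hs, ht, brk_add, smul_add, add_comm m n]

theorem isT_gen (g : EGen r) {v : LambdaMod r} (hv : isT v) :
    isT (RingQuot.mkRingHom (ERel r) (eg g) • v) := by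
  obtain ⟨n, s, rfl⟩ := hv
  cases g with
  | P a i =>
    change isT ((genP a i : EAlg r) • _)
    obtain ⟨t, ht⟩ := F_raise' n a.toNat s
    refine ⟨n + a.toNat, tow (n + a.toNat - a).toNat (sgenp i) * t, ?_⟩
    rw [ht, ← mul_smul, gFPn, mul_smul, brk_towP]
    congr 3; push_cast; omega
  | Q a i =>
    change isT ((genQ a i : EAlg r) • _)
    obtain ⟨t, ht⟩ := F_raise' n a.toNat s
    refine ⟨n + a.toNat, tow (n + a.toNat - a).toNat (sgenq i) * t, ?_⟩
    rw [ht, ← mul_smul, gFQn, mul_smul, brk_towQ]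
    congr 3; push_cast; omega
  | E =>
    change isT ((genE : EAlg r) • _)
    refine ⟨n, sgene * s, ?_⟩
    cases n with
    | zero => simp [brk_e]
    | succ n =>
      rw [← F_raise, ← mul_smul, pow_succ', ← mul_assoc, gEF, one_mul]
  | F =>
    change isT ((genF : EAlg r) • _)
    exact ⟨n + 1, s, by rw [← mul_smul, pow_succ']⟩

theorem isT_smul (x : EAlg r) (v : LambdaMod r) (hv : isT v) : isT (x • v) := by
  obtain ⟨x, rfl⟩ := RingQuot.mkRingHom_surjective _ x
  induction x using FreeAlgebra.induction generalizing v with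
  | grade0 c =>
    obtain ⟨n, s, rfl⟩ := hv
    refine ⟨n, c * s, ?_⟩
    have h1 : brk ((c : SAlg r) * s) = c • brk s := by
      rw [← zsmul_eq_mul]; simp [brk]
    rw [h1, eq_intCast (algebraMap ℤ (FreeAlgebra ℤ (EGen r))), map_intCast, Int.cast_smul_eq_zsmul,
      smul_comm]
  | grade1 g => exact isT_gen g hv
  | mul a b ha hb => rw [map_mul, mul_smul]; exact ha _ (hb _ hv)
  | add a b ha hb => rw [map_add, add_smul]; exact isT_add (ha _ hv) (hb _ hv)

theorem isT_all (v : LambdaMod r) : isT v := by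
  obtain ⟨x, rfl⟩ := Submodule.Quotient.mk_surjective _ v
  have := isT_smul x (lm 1) ⟨0, 1, by simp [brk]⟩
  rwa [smul_lm] at this

theorem vac_brk (v : LambdaMod r) (hv : ∀ (a : ℤ) (i : Fin r), 0 < a → (genP a i : EAlg r) • v = 0) : ∃ s, v = brk s := by
  obtain ⟨n, s, rfl⟩ := isT_all v
  induction n generalizing s with
  | zero => exact ⟨s, by simp⟩
  | succ n ih =>
    have h0 : ∀ i : Fin r, (genP 0 i : EAlg r) • brk s = 0 := by
      intro i
      have := hv (n + 1 : ℕ) i (by omega)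
      rw [← mul_smul, gFPn, sub_self, mul_smul] at this
      have h2 := congrArg (fun w => (genE ^ (n + 1) : EAlg r) • w) this
      simp only [smul_zero] at h2
      rwa [← mul_smul, XEF, one_smul] at h2
    have h1 := (eCl 0).eps_smul (V := LambdaMod r) (brk s) h0 (List.finRange r)
      (List.nodup_finRange r)
    have h2 : brk (eps sgenp sgenq (List.finRange r) * s) = epsE r 0 • brk s := by
      refine brk_mul _ _ _ ?_
      rw [brk, eps, map_mul, map_list_prod, map_list_prod, List.map_map, List.map_map,
        MulOpposite.unop_mul, Module.End.mul_apply]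
      simp only [Function.comp_def, Phi_p, Phi_q]
      rw [op_list_prod _ _ _ endP_mk, op_list_prod _ _ _ endQ_mk, one_mul]
      rfl
    rw [h1, ← sX.ef, mul_assoc, brk_e] at h2
    have h3 : ((genF ^ (n + 1) : EAlg r) • brk s : LambdaMod r) = (genF ^ n : EAlg r) • brk (sgenf * s) := by
      rw [F_raise n, brk_e, h2]
    rw [h3] at hv ⊢
    exact ih _ hv

theorem Phi_surj : Function.Surjective (Phi r) := by
  intro φ
  obtain ⟨s, hs⟩ := vac_brk (φ.unop (lm 1)) (fun a i ha => by
    rw [← map_smul, smul_lm, lm_zero (lm_P a ha i), map_zero])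
  refine ⟨s, MulOpposite.unop_injective (end_ext ?_)⟩
  exact hs.symm

end surj

section inj
variable {r : ℕ}

/-- eventually zero sequences -/
def evZ (S : Type*) [Ring S] : Submodule ℤ (ℤ → S) where
  carrier := {m | ∃ K : ℤ, ∀ k, K ≤ k → m k = 0}
  zero_mem' := ⟨0, fun _ _ => rfl⟩
  add_mem' := by
    rintro a b ⟨K, hK⟩ ⟨L, hL⟩
    refine ⟨max K L, fun k hk => ?_⟩
    rw [Pi.add_apply, hK k (le_trans (le_max_left _ _) hk),
      hL k (le_trans (le_max_right _ _) hk), add_zero]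
  smul_mem' := by
    rintro c a ⟨K, hK⟩
    refine ⟨K, fun k hk => ?_⟩
    rw [Pi.smul_apply, hK k hk, smul_zero]

abbrev MGerm (S : Type*) [Ring S] := (ℤ → S) ⧸ evZ S

abbrev gm {S : Type*} [Ring S] (m : ℤ → S) : MGerm S := Submodule.Quotient.mk m

theorem gm_eq {S : Type*} [Ring S] {m n : ℤ → S} (K : ℤ) (h : ∀ k, K ≤ k → m k = n k) :
    gm m = gm n :=
  (Submodule.Quotient.eq _).2 ⟨K, fun k hk => by rw [Pi.sub_apply, h k hk, sub_self]⟩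

/-- shift operators -/
def shiftOp {S : Type*} [Ring S] (c : ℤ) : Module.End ℤ (MGerm S) :=
  Submodule.mapQ (evZ S) (evZ S)
    { toFun := fun m k => m (k + c), map_add' := fun _ _ => rfl, map_smul' := fun _ _ => rfl }
    (by
      rintro m ⟨K, hK⟩
      exact ⟨K - c, fun k hk => hK _ (by omega)⟩)

/-- pointwise left multiplication -/
def mulOp {S : Type*} [Ring S] (y : ℤ → S) : Module.End ℤ (MGerm S) :=
  Submodule.mapQ (evZ S) (evZ S)
    { toFun := fun m k => y k * m k
      map_add' := fun a b => funext fun k => mul_add _ _ _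
      map_smul' := fun c a => funext fun k => mul_smul_comm c (y k) (a k) }
    (by
      rintro m ⟨K, hK⟩
      refine ⟨K, fun k hk => ?_⟩
      change y k * m k = 0
      rw [hK k hk, mul_zero])

/-- right multiplication -/
def rgtOp {S : Type*} [Ring S] (s : S) : Module.End ℤ (MGerm S) :=
  Submodule.mapQ (evZ S) (evZ S)
    { toFun := fun m k => m k * s
      map_add' := fun a b => funext fun k => add_mul _ _ _
      map_smul' := fun c a => funext fun k => smul_mul_assoc c (a k) s }
    (by
      rintro m ⟨K, hK⟩
      refine ⟨K, fun k hk => ?_⟩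
      change m k * s = 0
      rw [hK k hk, zero_mul])

theorem shiftOp_mk {S : Type*} [Ring S] (c : ℤ) (m : ℤ → S) :
    shiftOp (S := S) c (gm m) = gm (fun k => m (k + c)) := rfl
theorem mulOp_mk {S : Type*} [Ring S] (y m : ℤ → S) :
    mulOp y (gm m) = gm (fun k => y k * m k) := rfl
theorem rgtOp_mk {S : Type*} [Ring S] (s : S) (m : ℤ → S) :
    rgtOp s (gm m) = gm (fun k => m k * s) := rfl
theorem gm_add {S : Type*} [Ring S] (m n : ℤ → S) : gm m + gm n = gm (fun k => m k + n k) := rfl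

theorem MGerm_ext {S : Type*} [Ring S] {φ ψ : Module.End ℤ (MGerm S)}
    (h : ∀ m, φ (gm m) = ψ (gm m)) : φ = ψ := by
  apply LinearMap.ext
  intro v
  obtain ⟨x, rfl⟩ := Submodule.Quotient.mk_surjective _ v
  exact h x

noncomputable def towF (x : SAlg r) (a : ℤ) (k : ℤ) : SAlg r := tow (k - a).toNat x

noncomputable def rhoGen : EGen r → Module.End ℤ (MGerm (SAlg r))
  | .P a i => mulOp (towF (sgenp i) a)
  | .Q a i => mulOp (towF (sgenq i) a)
  | .E => shiftOp 1
  | .F => shiftOp (-1)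

theorem shift_mulOp (x : SAlg r) (a : ℤ) :
    shiftOp 1 * mulOp (towF x a) = mulOp (towF x (a - 1)) * shiftOp 1 := by
  apply MGerm_ext
  intro m
  simp only [Module.End.mul_apply, shiftOp_mk, mulOp_mk, towF]
  refine gm_eq 0 fun k _ => ?_
  rw [show k + 1 - a = k - (a - 1) by ring]

theorem mulOp_anti (x y : SAlg r) (c : ℤ) (h : x * y + y * x = c)
    (hx : (∃ i, x = sgenp i) ∨ ∃ i, x = sgenq i) (hy : (∃ i, y = sgenp i) ∨ ∃ i, y = sgenq i)
    (a b : ℤ) :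
    mulOp (towF x a) * mulOp (towF y b) + mulOp (towF y b) * mulOp (towF x a) =
      ((if a = b then c else 0 : ℤ) : Module.End ℤ (MGerm (SAlg r))) := by
  apply MGerm_ext
  intro m
  simp only [Module.End.mul_apply, LinearMap.add_apply, mulOp_mk, gm_add, towF]
  have h2 : ∀ d : ℤ, ((d : ℤ) : Module.End ℤ (MGerm (SAlg r))) (gm m)
      = gm (fun k => (d : SAlg r) * m k) := by
    intro d
    rw [Module.End.intCast_apply, gm, ← Submodule.Quotient.mk_smul]
    refine gm_eq 0 fun k _ => ?_
    rw [Pi.smul_apply, zsmul_eq_mul]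
  rw [h2]
  refine gm_eq (max a b) fun k hk => ?_
  have ha := le_trans (le_max_left _ _) hk
  have hb := le_trans (le_max_right _ _) hk
  have := sX.tower_anti x y c h hx hy (k - a).toNat (k - b).toNat
  rw [← mul_assoc, ← mul_assoc, ← add_mul, this]
  congr 2
  by_cases hab : a = b
  · simp [hab]
  · rw [if_neg hab, if_neg (by omega)]

theorem mulOp_sq (x : SAlg r) (h : x * x = 0) (a : ℤ) :
    mulOp (towF x a) * mulOp (towF x a) = 0 := by
  apply MGerm_ext
  intro m
  simp only [Module.End.mul_apply, mulOp_mk, towF]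
  refine gm_eq (n := 0) 0 fun k _ => ?_
  rw [← mul_assoc, tow, sX.tower_sq x h, zero_mul]; rfl

theorem relRho ⦃x y : FreeAlgebra ℤ (EGen r)⦄ (h : ERel r x y) :
    FreeAlgebra.lift ℤ (rhoGen (r := r)) x = FreeAlgebra.lift ℤ (rhoGen (r := r)) y := by
  cases h with
  | Psq a i => simpa [eg, rhoGen] using mulOp_sq _ (sCl.psq i) a
  | Qsq a i => simpa [eg, rhoGen] using mulOp_sq _ (sCl.qsq i) a
  | EP a i => simpa [eg, rhoGen] using shift_mulOp (sgenp i) a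
  | EQ a i => simpa [eg, rhoGen] using shift_mulOp (sgenq i) a
  | PP a b i j =>
    simpa [eg, rhoGen] using mulOp_anti (sgenp i) (sgenp j) 0 (by simpa using sCl.pp i j)
      (.inl ⟨_, rfl⟩) (.inl ⟨_, rfl⟩) a b
  | QQ a b i j =>
    simpa [eg, rhoGen] using mulOp_anti (sgenq i) (sgenq j) 0 (by simpa using sCl.qq i j)
      (.inr ⟨_, rfl⟩) (.inr ⟨_, rfl⟩) a b
  | PQ a b i j =>
    have := mulOp_anti (sgenp i) (sgenq j) (if i = j then 1 else 0)
      (by rw [sCl.pq i j]; split_ifs <;> simp) (.inl ⟨_, rfl⟩) (.inr ⟨_, rfl⟩) a b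
    simp only [eg, map_add, map_mul, FreeAlgebra.lift_ι_apply, rhoGen]
    rw [this]
    by_cases h1 : a = b <;> by_cases h2 : i = j <;> simp [h1, h2]
  | EFone =>
    simp only [eg, map_one, map_mul, FreeAlgebra.lift_ι_apply, rhoGen]
    apply MGerm_ext
    intro m
    simp [Module.End.mul_apply, shiftOp_mk]
  | FEone =>
    simp only [eg, map_one, map_mul, FreeAlgebra.lift_ι_apply, rhoGen]
    apply MGerm_ext
    intro m
    simp [Module.End.mul_apply, shiftOp_mk]

noncomputable def rho (r : ℕ) : EAlg r →+* Module.End ℤ (MGerm (SAlg r)) :=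
  RingQuot.lift ⟨(FreeAlgebra.lift ℤ (rhoGen (r := r))).toRingHom, relRho⟩

theorem rho_mk (x : FreeAlgebra ℤ (EGen r)) :
    rho r (RingQuot.mkRingHom (ERel r) x) = FreeAlgebra.lift ℤ rhoGen x :=
  RingQuot.lift_mkRingHom_apply _ _ _

theorem rho_P (a : ℤ) (i : Fin r) : rho r (genP a i) = mulOp (towF (sgenp i) a) := by
  rw [genP, rho_mk, eg, FreeAlgebra.lift_ι_apply, rhoGen]
theorem rho_Q (a : ℤ) (i : Fin r) : rho r (genQ a i) = mulOp (towF (sgenq i) a) := by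
  rw [genQ, rho_mk, eg, FreeAlgebra.lift_ι_apply, rhoGen]
theorem rho_E : rho r genE = shiftOp 1 := by
  rw [genE, rho_mk, eg, FreeAlgebra.lift_ι_apply, rhoGen]
theorem rho_F : rho r genF = shiftOp (-1) := by
  rw [genF, rho_mk, eg, FreeAlgebra.lift_ι_apply, rhoGen]

theorem rho_rgt (x : EAlg r) (s : SAlg r) (v : MGerm (SAlg r)) :
    rho r x (rgtOp s v) = rgtOp s (rho r x v) := by
  obtain ⟨x, rfl⟩ := RingQuot.mkRingHom_surjective _ x
  rw [rho_mk]
  induction x using FreeAlgebra.induction generalizing v with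
  | grade0 c =>
    rw [eq_intCast (algebraMap ℤ (FreeAlgebra ℤ (EGen r))), map_intCast,
      Module.End.intCast_apply, Module.End.intCast_apply, map_zsmul]
  | grade1 g =>
    obtain ⟨m, rfl⟩ := Submodule.Quotient.mk_surjective _ v
    rw [FreeAlgebra.lift_ι_apply]
    cases g with
    | P a i => simp only [rhoGen, rgtOp_mk, mulOp_mk, mul_assoc]
    | Q a i => simp only [rhoGen, rgtOp_mk, mulOp_mk, mul_assoc]
    | E => rfl
    | F => rfl
  | mul a b ha hb => rw [map_mul, Module.End.mul_apply, Module.End.mul_apply, hb, ha]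
  | add a b ha hb => rw [map_add, LinearMap.add_apply, LinearMap.add_apply, hb, ha, map_add]

/-- vacuum -/
noncomputable def vac (r : ℕ) : MGerm (SAlg r) := gm (fun k => sgene ^ k.toNat)

theorem rho_vac0 (x : SAlg r) : mulOp (towF x 0) (vac r) = rgtOp x (vac r) := by
  rw [vac, mulOp_mk, rgtOp_mk]
  refine gm_eq 0 fun k hk => ?_
  rw [towF, sub_zero, tow, sX.tower_e]

theorem rho_vacP (a : ℤ) (ha : 0 < a) (i : Fin r) : rho r (genP a i) (vac r) = 0 := by
  rw [rho_P, vac, mulOp_mk]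
  refine gm_eq (n := 0) a fun k hk => ?_
  have h1 : k.toNat = (k - a).toNat + 1 + (a.toNat - 1) := by omega
  rw [towF, tow, h1, pow_add, pow_add, ← mul_assoc, ← mul_assoc, sX.tower_e, pow_one,
    mul_assoc _ _ sgene, sX.pe]
  simp

theorem rho_vacE : rho r genE (vac r) = rgtOp sgene (vac r) := by
  rw [rho_E, vac, shiftOp_mk, rgtOp_mk]
  refine gm_eq 0 fun k hk => ?_
  rw [← pow_succ]; congr 1; omega

theorem rgt_mul (s t : SAlg r) (v) : rgtOp (s * t) v = rgtOp t (rgtOp s v) := by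
  obtain ⟨m, rfl⟩ := Submodule.Quotient.mk_surjective _ v
  simp only [rgtOp_mk, mul_assoc]

theorem rho_list (l : List (Fin r)) (X : Fin r → EAlg r) (x : Fin r → SAlg r)
    (h : ∀ i, rho r (X i) (vac r) = rgtOp (x i) (vac r)) (v : MGerm (SAlg r))
    (y : SAlg r) (hv : v = rgtOp y (vac r)) :
    rho r ((l.map X).prod) v = rgtOp ((l.map x).prod * y) (vac r) := by
  subst hv
  induction l with
  | nil => simp
  | cons a l ih =>
    rw [List.map_cons, List.prod_cons, map_mul, Module.End.mul_apply, ih, rho_rgt, h,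
      List.map_cons, List.prod_cons, mul_assoc, rgt_mul (x a)]

theorem rho_vacF : rho r (genF * epsE r 0) (vac r) = rgtOp sgenf (vac r) := by
  rw [map_mul, Module.End.mul_apply, epsE, eps, map_mul, Module.End.mul_apply]
  have h1 : rho r ((List.map (genQ 0) (List.finRange r)).prod) (vac r) =
      rgtOp ((List.map sgenq (List.finRange r)).prod) (vac r) := by
    have := rho_list (List.finRange r) (genQ 0) sgenq (fun i => by rw [rho_Q, rho_vac0]) (vac r) 1
      (by
        rw [vac, rgtOp_mk]; simp)
    rwa [mul_one] at this
  rw [rho_list _ (genP 0) sgenp (fun i => by rw [rho_P, rho_vac0]) _ _ h1]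
  have h2 := sX.ef (r := r)
  rw [eps] at h2
  rw [← h2, rgt_mul, rho_rgt, ← rho_vacE]
  congr 1
  rw [← Module.End.mul_apply, ← map_mul, gFE, map_one]
  rfl

noncomputable def psi (x : EAlg r) : MGerm (SAlg r) := rho r x (vac r)

theorem psi_J (x : EAlg r) (hx : x ∈ JId r) : psi x = 0 := by
  unfold JId at hx
  induction hx using Submodule.span_induction with
  | mem x h =>
    obtain ⟨a, i, ha, rfl⟩ := h
    exact rho_vacP a ha i
  | zero => simp [psi]
  | add x y _ _ hx hy =>
    unfold psi at *
    rw [map_add, LinearMap.add_apply, hx, hy, add_zero]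
  | smul c x _ hx =>
    unfold psi at *
    rw [smul_eq_mul, map_mul, Module.End.mul_apply, hx, map_zero]

/-- predicate: on `Λ`, `Φ s` is intertwined with right multiplication by `s`. -/
def isI (s : SAlg r) : Prop :=
  ∀ x y : EAlg r, (Phi r s).unop (lm x) = lm y → psi y = rgtOp s (psi x)

theorem isI_of (s : SAlg r) (h : ∀ x, ∃ y, (Phi r s).unop (lm x) = lm y ∧ psi y = rgtOp s (psi x)) :
    isI s := by
  intro x y hy
  obtain ⟨z, hz, hz2⟩ := h x
  rw [hz] at hy
  have := psi_J _ ((Submodule.Quotient.eq _).1 hy)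
  unfold psi at *
  rw [map_sub, LinearMap.sub_apply, sub_eq_zero] at this
  rw [← this, hz2]

theorem isI_gen (s : SAlg r) (y : EAlg r) (h : ∀ x, (Phi r s).unop (lm x) = lm (x * y))
    (hy : rho r y (vac r) = rgtOp s (vac r)) : isI s :=
  isI_of s fun x => ⟨_, h x, by
    rw [psi, map_mul, Module.End.mul_apply, hy, rho_rgt, psi]⟩

theorem isI_all (s : SAlg r) : isI s := by
  obtain ⟨s, rfl⟩ := RingQuot.mkRingHom_surjective _ s
  induction s using FreeAlgebra.induction with
  | grade0 c =>
    rw [eq_intCast (algebraMap ℤ (FreeAlgebra ℤ (SGen r))), map_intCast]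
    refine isI_of _ fun x => ⟨c • x, ?_, ?_⟩
    · rw [map_intCast, MulOpposite.unop_intCast, Module.End.intCast_apply]; rfl
    · rw [psi, map_zsmul, LinearMap.smul_apply, psi]
      obtain ⟨m, hm⟩ := Submodule.Quotient.mk_surjective _ (rho r x (vac r))
      rw [← hm, rgtOp_mk, ← Submodule.Quotient.mk_smul]
      congr 1
      funext k
      rw [Pi.smul_apply, zsmul_eq_mul, (Int.cast_commute c (m k)).eq]
  | grade1 g =>
    cases g with
    | p i => exact isI_gen (sgenp i) (genP 0 i) (fun x => by rw [Phi_p]; rfl)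
              (by rw [rho_P, rho_vac0])
    | q i => exact isI_gen (sgenq i) (genQ 0 i) (fun x => by rw [Phi_q]; rfl)
              (by rw [rho_Q, rho_vac0])
    | e => exact isI_gen sgene genE (fun x => by rw [Phi_e]; rfl) rho_vacE
    | f => exact isI_gen sgenf _ (fun x => by rw [Phi_f]; rfl) rho_vacF
  | mul a b ha hb =>
    rw [map_mul]
    refine isI_of _ fun x => ?_
    obtain ⟨y, hy⟩ := Submodule.Quotient.mk_surjective _
      ((Phi r (RingQuot.mkRingHom (SRel r) a)).unop (lm x))
    obtain ⟨z, hz⟩ := Submodule.Quotient.mk_surjective _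
      ((Phi r (RingQuot.mkRingHom (SRel r) b)).unop (lm y))
    refine ⟨z, ?_, ?_⟩
    · rw [map_mul, MulOpposite.unop_mul, Module.End.mul_apply, ← hy, ← hz]
    · rw [hb _ _ hz.symm, ha _ _ hy.symm, rgt_mul]
  | add a b ha hb =>
    rw [map_add]
    refine isI_of _ fun x => ?_
    obtain ⟨y, hy⟩ := Submodule.Quotient.mk_surjective _
      ((Phi r (RingQuot.mkRingHom (SRel r) a)).unop (lm x))
    obtain ⟨z, hz⟩ := Submodule.Quotient.mk_surjective _
      ((Phi r (RingQuot.mkRingHom (SRel r) b)).unop (lm x))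
    refine ⟨y + z, ?_, ?_⟩
    · rw [map_add, MulOpposite.unop_add, LinearMap.add_apply, ← hy, ← hz]; rfl
    · have h1 := ha _ _ hy.symm
      have h2 := hb _ _ hz.symm
      rw [psi, map_add, LinearMap.add_apply]
      rw [psi] at h1 h2
      rw [h1, h2]
      obtain ⟨m, hm⟩ := Submodule.Quotient.mk_surjective _ (psi x)
      rw [← hm, rgtOp_mk, rgtOp_mk, rgtOp_mk, gm_add]
      simp only [mul_add]

theorem Phi_inj : Function.Injective (Phi r) := by
  rw [injective_iff_map_eq_zero]
  intro s hs
  have h := isI_all s 1 0 (by rw [hs]; rfl)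
  rw [psi, psi, map_zero, map_one, LinearMap.zero_apply, Module.End.one_apply, vac, rgtOp_mk] at h
  obtain ⟨K, hK⟩ := (Submodule.Quotient.mk_eq_zero _).1 h.symm
  have h2 : sgene ^ K.toNat * s = 0 := hK K le_rfl
  have h3 : sgenf ^ K.toNat * (sgene ^ K.toNat * s) = 0 := by
    rw [h2, mul_zero]
  rwa [← mul_assoc, sX.f_e_pow, one_mul] at h3

end inj

/-!
Statement 13: `𝓔(r) ≅ End_{𝔈(r)}(Λ_r)^{op}` as unital ℤ-algebras, sending `p_i`, `q_i`,
`e`, `f` to the endomorphisms of `Λ_r` induced by right multiplication by `P_{0,i}`,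
`Q_{0,i}`, `E`, and `F·P_{0,[r]}·Q_{0,[r]}` respectively.
-/

theorem stmt_13 {r : ℕ} (hr : 0 < r) :
    ∃ Φ : SAlg r ≃ₐ[ℤ] (Module.End (EAlg r) (LambdaMod r))ᵐᵒᵖ,
      (∀ (i : Fin r) (x : EAlg r),
        (Φ (sgenp i)).unop (Submodule.Quotient.mk x) =
          Submodule.Quotient.mk (x * genP 0 i)) ∧
      (∀ (i : Fin r) (x : EAlg r),
        (Φ (sgenq i)).unop (Submodule.Quotient.mk x) =
          Submodule.Quotient.mk (x * genQ 0 i)) ∧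
      (∀ x : EAlg r,
        (Φ sgene).unop (Submodule.Quotient.mk x) =
          Submodule.Quotient.mk (x * genE)) ∧
      (∀ x : EAlg r,
        (Φ sgenf).unop (Submodule.Quotient.mk x) =
          Submodule.Quotient.mk
            (x * (genF * genPI 0 Finset.univ * genQI 0 Finset.univ))) := by
  refine ⟨AlgEquiv.ofRingEquiv (f := RingEquiv.ofBijective (Phi r) ⟨Phi_inj, Phi_surj⟩) ?_,
    ?_, ?_, ?_, ?_⟩
  · intro n
    rw [eq_intCast (algebraMap ℤ (SAlg r)), map_intCast,
      eq_intCast (algebraMap ℤ (Module.End (EAlg r) (LambdaMod r))ᵐᵒᵖ)]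
  · intro i x
    change (Phi r (sgenp i)).unop _ = _
    rw [Phi_p]; rfl
  · intro i x
    change (Phi r (sgenq i)).unop _ = _
    rw [Phi_q]; rfl
  · intro x
    change (Phi r sgene).unop _ = _
    rw [Phi_e]; rfl
  · intro x
    change (Phi r sgenf).unop _ = _
    rw [Phi_f, mul_assoc genF, PI_QI]; rfl
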